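/- arXiv:1602.08801 — 2 statements merged into one kernel-verified Lean document; each statement's English description precedes it below -/
import Mathlib

section
/- Let 1/2 < H < 1. There exist constants 0 < c ≤ C (depending only on H) such that for all 0 < r < s, with μ = (1/2)(s^{2H} + r^{2H} − (s−r)^{2H}): c·(s−r)·s^{2H−1} ≤ s^{2H} − μ ≤ C·(s−r)·s^{2H−1}. -/
/-!
Writing `p = 2 * H`, the quantity to estimate is `(s ^ p - r ^ p + (s - r) ^ p) / 2`. For `1 ≤ p`
the increment `s ^ p - r ^ p` lies between `(s - r) * s ^ (p - 1)`, by monotonicity of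
`x ↦ x ^ (p - 1)`, and `p * (s - r) * s ^ (p - 1)`, by convexity of `x ↦ x ^ p`, while
`(s - r) ^ p` lies between `0` and `(s - r) * s ^ (p - 1)`. This gives the constants `1 / 2` and
`(p + 1) / 2 = H + 1 / 2`.
-/

section RpowIncrements

variable {p x y : ℝ}

lemma rpow_eq_mul_rpow_sub_one (hp : p ≠ 0) (hx : 0 ≤ x) : x ^ p = x * x ^ (p - 1) := by
  rw [← Real.rpow_one_add' hx (by simpa using hp), add_sub_cancel]

lemma rpow_le_mul_rpow_sub_one (hp : 1 ≤ p) (hx : 0 ≤ x) (hxy : x ≤ y) :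
    x ^ p ≤ x * y ^ (p - 1) := by
  rw [rpow_eq_mul_rpow_sub_one (by positivity) hx]
  gcongr

lemma sub_mul_rpow_sub_one_le_rpow_sub_rpow (hp : 1 ≤ p) (hx : 0 ≤ x) (hxy : x ≤ y) :
    (y - x) * y ^ (p - 1) ≤ y ^ p - x ^ p := by
  rw [sub_mul, ← rpow_eq_mul_rpow_sub_one (by positivity) (hx.trans hxy)]
  exact sub_le_sub_left (rpow_le_mul_rpow_sub_one hp hx hxy) _

lemma rpow_sub_rpow_le_mul_rpow_sub_one_mul_sub (hp : 1 ≤ p) (hx : 0 ≤ x) (hy : 0 ≤ y) :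
    y ^ p - x ^ p ≤ p * y ^ (p - 1) * (y - x) := by
  have hconvex := convexOn_rpow hp
  have hderiv := Real.hasDerivAt_rpow_const (x := y) (Or.inr hp)
  rcases lt_trichotomy x y with hxy | rfl | hyx
  · have hslope := hconvex.slope_le_of_hasDerivAt hx hy hxy hderiv
    rwa [slope_def_field, div_le_iff₀ (sub_pos.2 hxy)] at hslope
  · simp
  · have hslope := hconvex.le_slope_of_hasDerivAt hy hx hyx hderiv
    rw [slope_def_field, le_div_iff₀ (sub_pos.2 hyx)] at hslope
    linarith

end RpowIncrements

theorem stmt_4_general {H r s : ℝ} (hH : 1 / 2 ≤ H) (hr : 0 ≤ r) (hrs : r ≤ s) :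
    1 / 2 * (s - r) * s ^ (2 * H - 1) ≤
        s ^ (2 * H) - (1 / 2) * (s ^ (2 * H) + r ^ (2 * H) - (s - r) ^ (2 * H)) ∧
      s ^ (2 * H) - (1 / 2) * (s ^ (2 * H) + r ^ (2 * H) - (s - r) ^ (2 * H)) ≤
        (H + 1 / 2) * (s - r) * s ^ (2 * H - 1) := by
  have hp : 1 ≤ 2 * H := by linarith
  have hd : 0 ≤ s - r := sub_nonneg.2 hrs
  have increment_ge := sub_mul_rpow_sub_one_le_rpow_sub_rpow hp hr hrs
  have increment_le := rpow_sub_rpow_le_mul_rpow_sub_one_mul_sub hp hr (hr.trans hrs)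
  have gap_nonneg : 0 ≤ (s - r) ^ (2 * H) := Real.rpow_nonneg hd _
  have gap_le := rpow_le_mul_rpow_sub_one hp hd (sub_le_self s hr)
  constructor <;> linarith

theorem stmt_4 (H : ℝ) (hH0 : 1 / 2 < H) (hH1 : H < 1) :
    ∃ c C : ℝ, 0 < c ∧ c ≤ C ∧ ∀ r s : ℝ, 0 < r → r < s →
      c * (s - r) * s ^ (2 * H - 1) ≤
        s ^ (2 * H) - (1 / 2) * (s ^ (2 * H) + r ^ (2 * H) - (s - r) ^ (2 * H)) ∧
      s ^ (2 * H) - (1 / 2) * (s ^ (2 * H) + r ^ (2 * H) - (s - r) ^ (2 * H)) ≤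
        C * (s - r) * s ^ (2 * H - 1) :=
  ⟨1 / 2, H + 1 / 2, by norm_num, by linarith, fun _ _ hr hrs =>
    stmt_4_general hH0.le hr.le hrs.le⟩
end

section
/- Let 1/2 < H < 1 and T > 0. Define ρ(s,r)² = (sr)^{2H} − μ(s,r)² with μ(s,r) = (1/2)(s^{2H}+r^{2H}−|s−r|^{2H}). Then there is a constant C (depending on H and T) such that for all 0 ≤ t < t' ≤ T: ∫_t^{t'} ∫_t^{t'} (1/ρ(s,r))·(2H s^{2H−1})(2H r^{2H−1}) ds dr ≤ C·(t'−t)^{2H₀}, where H₀ = H if 1/2 < H ≤ 2/3 and H₀ = 1 − H/2 if 2/3 < H < 1. -/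
/-!
Let `m` and `M` be the smaller and the larger of `s` and `r`, and `d = M - m`. The determinant
`ρ(s, r)²` is a quarter of Heron's product for the numbers `m ^ H`, `d ^ H`, `M ^ H`. The only
factor that is not immediately bounded below is `m ^ H + d ^ H - M ^ H`, and concavity of
`x ↦ x ^ H` gives it a multiple of `min m d ^ H`. Hence `1 / ρ(s, r)` is at most a multiple of
`m ^ (-H) * d ^ (-H)`, and the integrand at most a multiple of
`M ^ (2H - 1) * m ^ (H - 1) * d ^ (-H)`.

With `p = min (2H - 1) (1 - H)` one has `2 H₀ = p + 1`, and `M ^ (2H - 1)` may be replaced by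
`T ^ (2H - 1 - p) * M ^ p`. Since `M = m + d`, what remains is at most a sum of two products
`m ^ α * d ^ β` with `-1 < α, β ≤ 0` and `α + β = p - 1`, and the double integral of each over
`(t, t']²` is of order `(t' - t) ^ (α + β + 2)`: shifting `t` to `0` increases the product, and
where `m + d = M` the larger of `m` and `d` may be replaced by `M / 2`.
-/

open MeasureTheory intervalIntegral Set

lemma rpow_le_rpow_sub_mul_rpow {x T p q : ℝ} (hx : 0 < x) (hxT : x ≤ T) (hqp : q ≤ p) :
    x ^ p ≤ T ^ (p - q) * x ^ q := by
  calc x ^ p = x ^ (p - q) * x ^ q := by rw [← Real.rpow_add hx, sub_add_cancel]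
    _ ≤ T ^ (p - q) * x ^ q := by gcongr

section Concavity

lemma concaveOn_add_le_add_of_mem_segment {E : Type*} [AddCommGroup E] [Module ℝ E] {s : Set E}
    {f : E → ℝ} (hf : ConcaveOn ℝ s f) {x y z w : E} (hx : x ∈ s) (hy : y ∈ s)
    (hz : z ∈ segment ℝ x y) (hsum : z + w = x + y) : f x + f y ≤ f z + f w := by
  obtain ⟨a, b, ha, hb, hab, rfl⟩ := hz
  have hw : w = b • x + a • y := by
    rw [eq_sub_of_add_eq' hsum, ← one_smul ℝ (x + y), ← hab]
    module
  have hz' := hf.2 hx hy ha hb hab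
  have hw' := hf.2 hx hy hb ha (by rwa [add_comm])
  rw [← hw] at hw'
  simp only [smul_eq_mul] at hz' hw'
  linear_combination hz' + hw' - (f x + f y) * hab

variable {H x y : ℝ}

lemma two_sub_two_rpow_pos (hH1 : H < 1) : 0 < 2 - (2 : ℝ) ^ H :=
  sub_pos.2 (by simpa using Real.rpow_lt_rpow_of_exponent_lt one_lt_two hH1)

lemma two_sub_two_rpow_nonneg (hH1 : H ≤ 1) : 0 ≤ 2 - (2 : ℝ) ^ H :=
  sub_nonneg.2 (by simpa using Real.rpow_le_rpow_of_exponent_le one_le_two hH1)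

lemma two_sub_two_rpow_mul_rpow_le (hH0 : 0 ≤ H) (hH1 : H ≤ 1) (hx : 0 ≤ x) (hxy : x ≤ y) :
    (2 - 2 ^ H) * x ^ H ≤ x ^ H + y ^ H - (x + y) ^ H := by
  have hy : 0 ≤ y := hx.trans hxy
  have hseg : y ∈ segment ℝ x (x + y) := by
    rw [segment_eq_Icc (by linarith)]
    exact ⟨hxy, by linarith⟩
  have := concaveOn_add_le_add_of_mem_segment (Real.concaveOn_rpow hH0 hH1) hx (add_nonneg hx hy)
    hseg (w := 2 * x) (by ring)
  rw [Real.mul_rpow zero_le_two hx] at this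
  linarith

lemma two_sub_two_rpow_mul_rpow_mul_rpow_le (hH0 : 0 ≤ H) (hH1 : H ≤ 1) (hx : 0 ≤ x)
    (hy : 0 ≤ y) :
    (2 - 2 ^ H) * (x ^ H * y ^ H) ≤ (x ^ H + y ^ H - (x + y) ^ H) * (x + y) ^ H := by
  wlog hxy : x ≤ y generalizing x y
  · rw [mul_comm (x ^ H), add_comm x, add_comm (x ^ H)]
    exact this hy hx (le_of_not_ge hxy)
  have hgap := two_sub_two_rpow_mul_rpow_le hH0 hH1 hx hxy
  have hcoef := mul_nonneg (two_sub_two_rpow_nonneg hH1) (Real.rpow_nonneg hx H)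
  rw [← mul_assoc]
  gcongr
  · exact hcoef.trans hgap
  · linarith

end Concavity

section FractionalBrownianMotion

/-- The covariance `μ(s, r)` of fractional Brownian motion with Hurst parameter `H`. -/
noncomputable def fbmCov (H s r : ℝ) : ℝ :=
  (1 / 2) * (s ^ (2 * H) + r ^ (2 * H) - |s - r| ^ (2 * H))

/-- The square root `ρ(s, r)` of the determinant of the covariance matrix of fractional Brownian
motion at the times `s` and `r`. -/
noncomputable def fbmRho (H s r : ℝ) : ℝ :=
  Real.sqrt ((s * r) ^ (2 * H) - fbmCov H s r ^ 2)

variable {H s r : ℝ}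

lemma fbmRho_comm (H s r : ℝ) : fbmRho H s r = fbmRho H r s := by
  rw [fbmRho, fbmRho, fbmCov, fbmCov, mul_comm s, add_comm (s ^ (2 * H)), abs_sub_comm]

lemma fbmRho_nonneg (H s r : ℝ) : 0 ≤ fbmRho H s r := Real.sqrt_nonneg _

lemma mul_le_heron {x y z : ℝ} (hx : 0 ≤ x) (hy : 0 ≤ y) (hxz : x ≤ z) (hyz : y ≤ z)
    (hzxy : z ≤ x + y) :
    (1 / 2) * ((x + y - z) * z) * (x * y) ≤
      (z * x) ^ 2 - ((1 / 2) * (z ^ 2 + x ^ 2 - y ^ 2)) ^ 2 := by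
  have : 0 ≤ z := hx.trans hxz
  have : 0 ≤ x + y - z := sub_nonneg.2 hzxy
  have : 0 ≤ z - x := sub_nonneg.2 hxz
  have : 0 ≤ z - y := sub_nonneg.2 hyz
  calc (1 / 2) * ((x + y - z) * z) * (x * y)
      = (1 / 4) * (z + z) * (x + y - z) * x * y := by ring
    _ ≤ (1 / 4) * (x + y + z) * (x + y - z) * (x + (z - y)) * (y + (z - x)) := by
        gcongr <;> linarith
    _ = _ := by ring

lemma le_fbmRho (hH0 : 0 ≤ H) (hH1 : H ≤ 1) (hs : 0 ≤ s) (hr : 0 ≤ r) :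
    √((2 - 2 ^ H) / 2) * (min s r ^ H * |s - r| ^ H) ≤ fbmRho H s r := by
  wlog hrs : r ≤ s generalizing s r
  · rw [min_comm, abs_sub_comm, fbmRho_comm]
    exact this hr hs (le_of_not_ge hrs)
  have hd : 0 ≤ s - r := sub_nonneg.2 hrs
  rw [min_eq_right hrs, abs_of_nonneg hd]
  have rpow_two_mul : ∀ x : ℝ, 0 ≤ x → x ^ (2 * H) = (x ^ H) ^ 2 := fun x hx => by
    rw [mul_comm, Real.rpow_mul hx, Real.rpow_two]
  have hgap := two_sub_two_rpow_mul_rpow_mul_rpow_le hH0 hH1 hr hd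
  have hsub := Real.rpow_add_le_add_rpow hr hd hH0 hH1
  rw [add_sub_cancel] at hgap hsub
  have hheron := mul_le_heron (Real.rpow_nonneg hr H) (Real.rpow_nonneg hd H)
    (Real.rpow_le_rpow hr hrs hH0) (Real.rpow_le_rpow hd (by linarith) hH0) hsub
  refine Real.le_sqrt_of_sq_le ?_
  rw [fbmCov, abs_of_nonneg hd, rpow_two_mul _ (mul_nonneg hs hr), rpow_two_mul _ hs,
    rpow_two_mul _ hr, rpow_two_mul _ hd, Real.mul_rpow hs hr, mul_pow,
    Real.sq_sqrt (by linarith [two_sub_two_rpow_nonneg hH1])]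
  refine le_trans ?_ hheron
  calc (2 - 2 ^ H) / 2 * (r ^ H * (s - r) ^ H) ^ 2
      = (1 / 2) * ((2 - 2 ^ H) * (r ^ H * (s - r) ^ H)) * (r ^ H * (s - r) ^ H) := by ring
    _ ≤ _ := by gcongr

lemma fbm_integrand_le (hH0 : 0 ≤ H) (hH1 : H < 1) (hs : 0 < s) (hr : 0 < r) (hsr : s ≠ r) :
    1 / fbmRho H s r * (2 * H * s ^ (2 * H - 1)) * (2 * H * r ^ (2 * H - 1)) ≤
      4 * H ^ 2 / √((2 - 2 ^ H) / 2) *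
        (max s r ^ (2 * H - 1) * min s r ^ (H - 1) * |s - r| ^ (-H)) := by
  have hm : 0 < min s r := lt_min hs hr
  have hd : 0 < |s - r| := abs_pos.2 (sub_ne_zero.2 hsr)
  have hc : 0 < √((2 - (2 : ℝ) ^ H) / 2) :=
    Real.sqrt_pos.2 (half_pos (two_sub_two_rpow_pos hH1))
  have hmaxmin : s ^ (2 * H - 1) * r ^ (2 * H - 1) =
      max s r ^ (2 * H - 1) * min s r ^ (H - 1) * min s r ^ H := by
    rw [mul_assoc, ← Real.rpow_add hm, ← Real.mul_rpow hs.le hr.le, ← max_mul_min s r,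
      Real.mul_rpow (hs.le.trans (le_max_left s r)) hm.le]
    ring_nf
  calc 1 / fbmRho H s r * (2 * H * s ^ (2 * H - 1)) * (2 * H * r ^ (2 * H - 1))
      = 4 * H ^ 2 * (s ^ (2 * H - 1) * r ^ (2 * H - 1)) * (1 / fbmRho H s r) := by ring
    _ ≤ 4 * H ^ 2 * (s ^ (2 * H - 1) * r ^ (2 * H - 1)) *
          (1 / (√((2 - 2 ^ H) / 2) * (min s r ^ H * |s - r| ^ H))) := by
        gcongr
        exact le_fbmRho hH0 hH1.le hs.le hr.le
    _ = _ := by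
        rw [hmaxmin, Real.rpow_neg hd.le]
        field_simp

lemma abs_fbm_integrand_le {T q : ℝ} (hH0 : 0 ≤ H) (hH1 : H < 1) (hs : 0 < s) (hr : 0 < r)
    (hsT : s ≤ T) (hrT : r ≤ T) (hsr : s ≠ r) (hq : q ≤ 2 * H - 1) :
    |1 / fbmRho H s r * (2 * H * s ^ (2 * H - 1)) * (2 * H * r ^ (2 * H - 1))| ≤
      4 * H ^ 2 / √((2 - 2 ^ H) / 2) * T ^ (2 * H - 1 - q) *
        (max s r ^ q * min s r ^ (H - 1) * |s - r| ^ (-H)) := by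
  have : 0 < min s r := lt_min hs hr
  have := fbmRho_nonneg H s r
  have hmax := rpow_le_rpow_sub_mul_rpow (lt_max_of_lt_left hs) (max_le hsT hrT) hq
  rw [abs_of_nonneg (by positivity)]
  refine (fbm_integrand_le hH0 hH1 hs hr hsr).trans ?_
  rw [mul_assoc _ (T ^ _)]
  simp only [← mul_assoc (T ^ (2 * H - 1 - q))]
  gcongr

end FractionalBrownianMotion

section PowerIntegrals

variable {q : ℝ}

lemma intervalIntegrable_abs_rpow (hq : -1 < q) (a b : ℝ) :
    IntervalIntegrable (fun x => |x| ^ q) volume a b := by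
  have from_zero_of_nonneg : ∀ c, 0 ≤ c → IntervalIntegrable (fun x => |x| ^ q) volume 0 c :=
    fun c hc => (intervalIntegrable_rpow' hq).congr fun x hx => by
      rw [uIoc_of_le hc] at hx
      simp only [abs_of_pos hx.1]
  have from_zero : ∀ c, IntervalIntegrable (fun x => |x| ^ q) volume 0 c := fun c => by
    rcases le_total 0 c with hc | hc
    · exact from_zero_of_nonneg c hc
    · rw [IntervalIntegrable.iff_comp_neg]
      simpa only [abs_neg, neg_zero] using from_zero_of_nonneg (-c) (neg_nonneg.2 hc)
  exact (from_zero a).symm.trans (from_zero b)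

lemma integral_abs_rpow_of_nonneg (hq : -1 < q) {c : ℝ} (hc : 0 ≤ c) :
    ∫ x in 0..c, |x| ^ q = c ^ (q + 1) / (q + 1) := by
  have hcongr : ∫ x in 0..c, |x| ^ q = ∫ x in 0..c, x ^ q := integral_congr fun x hx => by
    rw [uIcc_of_le hc] at hx
    simp only [abs_of_nonneg hx.1]
  rw [hcongr, integral_rpow (Or.inl hq), Real.zero_rpow (by linarith), sub_zero]

lemma integral_abs_sub_rpow (hq : -1 < q) {a b s : ℝ} (has : a ≤ s) (hsb : s ≤ b) :
    ∫ r in a..b, |s - r| ^ q = ((s - a) ^ (q + 1) + (b - s) ^ (q + 1)) / (q + 1) := by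
  have hneg : ∫ x in (s - b)..0, |x| ^ q = ∫ x in 0..(b - s), |x| ^ q := by
    simpa only [abs_neg, neg_zero, neg_sub] using
      (integral_comp_neg (a := 0) (b := b - s) fun x => |x| ^ q).symm
  rw [integral_comp_sub_left (fun x => |x| ^ q) s,
    ← integral_add_adjacent_intervals (intervalIntegrable_abs_rpow hq _ 0)
      (intervalIntegrable_abs_rpow hq 0 _), hneg,
    integral_abs_rpow_of_nonneg hq (sub_nonneg.2 hsb),
    integral_abs_rpow_of_nonneg hq (sub_nonneg.2 has), ← add_div, add_comm]

lemma intervalIntegrable_abs_sub_rpow (hq : -1 < q) (a b s : ℝ) :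
    IntervalIntegrable (fun r => |s - r| ^ q) volume a b := by
  simpa only [sub_sub_cancel] using
    (intervalIntegrable_abs_rpow hq (s - a) (s - b)).comp_sub_left s

lemma integral_abs_sub_rpow_le (hq : -1 < q) {a b s : ℝ} (has : a ≤ s) (hsb : s ≤ b) :
    ∫ r in a..b, |s - r| ^ q ≤ 2 * (b - a) ^ (q + 1) / (q + 1) := by
  have hq1 : 0 < q + 1 := by linarith
  have : 0 ≤ s - a := sub_nonneg.2 has
  have : 0 ≤ b - s := sub_nonneg.2 hsb
  rw [integral_abs_sub_rpow hq has hsb, two_mul]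
  gcongr

lemma intervalIntegrable_sub_rpow (hq : -1 < q) (a b : ℝ) :
    IntervalIntegrable (fun r => (r - a) ^ q) volume a b := by
  simpa only [sub_add_cancel] using
    (intervalIntegrable_rpow' (a := a - a) (b := b - a) hq).comp_sub_right a

lemma integral_sub_rpow (hq : -1 < q) (a b : ℝ) :
    ∫ r in a..b, (r - a) ^ q = (b - a) ^ (q + 1) / (q + 1) := by
  rw [integral_comp_sub_right (fun x => x ^ q) a, sub_self, integral_rpow (Or.inl hq),
    Real.zero_rpow (by linarith), sub_zero]

end PowerIntegrals

/-- The iterated integral of `|f|` over `(a, b]²` is at most `B`, as witnessed by an integrable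
majorant `G s` of each section `f s` and an integrable majorant `h` of the integrals of the `G s`.
Asking nothing of `f` itself makes such bounds stable under pointwise domination. -/
def IteratedIntegralBound (a b : ℝ) (f : ℝ → ℝ → ℝ) (B : ℝ) : Prop :=
  ∃ (G : ℝ → ℝ → ℝ) (h : ℝ → ℝ),
    (∀ s ∈ Ioc a b, (∀ᵐ r, r ∈ Ioc a b → |f s r| ≤ G s r) ∧
      IntervalIntegrable (G s) volume a b ∧ ∫ r in a..b, G s r ≤ h s) ∧
    IntervalIntegrable h volume a b ∧ ∫ s in a..b, h s ≤ B

namespace IteratedIntegralBound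

variable {a b B B' : ℝ} {f g : ℝ → ℝ → ℝ}

lemma integral_le (hab : a ≤ b) (hf : IteratedIntegralBound a b f B) :
    ∫ s in a..b, ∫ r in a..b, f s r ≤ B := by
  obtain ⟨G, h, hG, hint, hB⟩ := hf
  have inner : ∀ s ∈ Ioc a b, ‖∫ r in a..b, f s r‖ ≤ h s := fun s hs =>
    have ⟨hfG, hGint, hGh⟩ := hG s hs
    (norm_integral_le_of_norm_le hab hfG hGint).trans hGh
  exact (le_abs_self _).trans <|
    (norm_integral_le_of_norm_le hab (.of_forall inner) hint).trans hB

lemma mono (hg : IteratedIntegralBound a b g B)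
    (hfg : ∀ s ∈ Ioc a b, ∀ r ∈ Ioc a b, s ≠ r → |f s r| ≤ g s r) :
    IteratedIntegralBound a b f B := by
  obtain ⟨G, h, hG, hh⟩ := hg
  refine ⟨G, h, fun s hs => ⟨?_, (hG s hs).2⟩, hh⟩
  filter_upwards [(hG s hs).1, volume.ae_ne s] with r hgG hrs hr
  exact (hfg s hs r hr hrs.symm).trans ((le_abs_self _).trans (hgG hr))

lemma mono_right (hf : IteratedIntegralBound a b f B) (hBB' : B ≤ B') :
    IteratedIntegralBound a b f B' := by
  obtain ⟨G, h, hG, hint, hB⟩ := hf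
  exact ⟨G, h, hG, hint, hB.trans hBB'⟩

lemma add (hf : IteratedIntegralBound a b f B) (hg : IteratedIntegralBound a b g B') :
    IteratedIntegralBound a b (fun s r => f s r + g s r) (B + B') := by
  obtain ⟨F, k, hF, hk, hB⟩ := hf
  obtain ⟨G, h, hG, hh, hB'⟩ := hg
  refine ⟨fun s r => F s r + G s r, fun s => k s + h s, fun s hs => ?_, hk.add hh, ?_⟩
  · obtain ⟨hfF, hFint, hFk⟩ := hF s hs
    obtain ⟨hgG, hGint, hGh⟩ := hG s hs
    refine ⟨?_, hFint.add hGint, ?_⟩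
    · filter_upwards [hfF, hgG] with r hr hr' hmem
      exact (abs_add_le _ _).trans (add_le_add (hr hmem) (hr' hmem))
    · rw [intervalIntegral.integral_add hFint hGint]
      exact add_le_add hFk hGh
  · rw [intervalIntegral.integral_add hk hh]
    exact add_le_add hB hB'

lemma const_mul {c : ℝ} (hc : 0 ≤ c) (hf : IteratedIntegralBound a b f B) :
    IteratedIntegralBound a b (fun s r => c * f s r) (c * B) := by
  obtain ⟨G, h, hG, hint, hB⟩ := hf
  refine ⟨fun s r => c * G s r, fun s => c * h s, fun s hs => ?_, hint.const_mul c, ?_⟩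
  · obtain ⟨hfG, hGint, hGh⟩ := hG s hs
    refine ⟨?_, hGint.const_mul c, ?_⟩
    · filter_upwards [hfG] with r hr hmem
      rw [abs_mul, abs_of_nonneg hc]
      exact mul_le_mul_of_nonneg_left (hr hmem) hc
    · rw [intervalIntegral.integral_const_mul]
      exact mul_le_mul_of_nonneg_left hGh hc
  · rw [intervalIntegral.integral_const_mul]
    exact mul_le_mul_of_nonneg_left hB hc

lemma mul {u : ℝ → ℝ} {v : ℝ → ℝ → ℝ} {V : ℝ} (hu : IntervalIntegrable u volume a b)
    (hu0 : ∀ s ∈ Ioc a b, 0 ≤ u s) (hv : ∀ s ∈ Ioc a b, IntervalIntegrable (v s) volume a b)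
    (hv0 : ∀ s ∈ Ioc a b, ∀ r ∈ Ioc a b, 0 ≤ v s r)
    (hV : ∀ s ∈ Ioc a b, ∫ r in a..b, v s r ≤ V) :
    IteratedIntegralBound a b (fun s r => u s * v s r) ((∫ s in a..b, u s) * V) := by
  refine ⟨fun s r => u s * v s r, fun s => u s * V, fun s hs => ⟨?_, (hv s hs).const_mul _, ?_⟩,
    hu.mul_const V, (intervalIntegral.integral_mul_const V u).le⟩
  · exact .of_forall fun r hr => (abs_of_nonneg (mul_nonneg (hu0 s hs) (hv0 s hs r hr))).le
  · rw [intervalIntegral.integral_const_mul]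
    exact mul_le_mul_of_nonneg_left (hV s hs) (hu0 s hs)

end IteratedIntegralBound

section SingularKernels

lemma rpow_le_two_mul_rpow {x y α : ℝ} (hy : 0 < y) (hyx : y ≤ 2 * x) (hα : -1 ≤ α)
    (hα0 : α ≤ 0) : x ^ α ≤ 2 * y ^ α := by
  calc x ^ α ≤ (y / 2) ^ α :=
        Real.rpow_le_rpow_of_nonpos (by positivity) (by linarith) hα0
    _ = 2 ^ (-α) * y ^ α := by
        rw [Real.div_rpow hy.le zero_le_two, Real.rpow_neg zero_le_two, div_eq_inv_mul]
    _ ≤ 2 ^ (1 : ℝ) * y ^ α := by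
        gcongr
        · exact one_le_two
        · linarith
    _ = 2 * y ^ α := by rw [Real.rpow_one]

lemma rpow_mul_rpow_le_add {x y α β : ℝ} (hx : 0 < x) (hy : 0 < y) (hα : -1 ≤ α) (hα0 : α ≤ 0)
    (hβ : -1 ≤ β) (hβ0 : β ≤ 0) :
    x ^ α * y ^ β ≤ 2 * ((x + y) ^ α * y ^ β + (x + y) ^ β * x ^ α) := by
  have hxy : 0 < x + y := add_pos hx hy
  have hnonneg : 0 ≤ (x + y) ^ α * y ^ β ∧ 0 ≤ (x + y) ^ β * x ^ α := by
    constructor <;> positivity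
  rcases le_total y x with h | h
  · have := mul_le_mul_of_nonneg_right
      (rpow_le_two_mul_rpow hxy (x := x) (by linarith) hα hα0) (Real.rpow_nonneg hy.le β)
    linarith
  · have := mul_le_mul_of_nonneg_right
      (rpow_le_two_mul_rpow hxy (x := y) (by linarith) hβ hβ0) (Real.rpow_nonneg hx.le α)
    linarith

variable {α β : ℝ}

lemma min_rpow_mul_abs_sub_rpow_le {a s r : ℝ} (hα : -1 ≤ α) (hα0 : α ≤ 0) (hβ : -1 ≤ β)
    (hβ0 : β ≤ 0) (ha : 0 ≤ a) (has : a < s) (har : a < r) (hsr : s ≠ r) :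
    min s r ^ α * |s - r| ^ β ≤
      2 * ((s - a) ^ α * |s - r| ^ β + (s - a) ^ β * (r - a) ^ α) := by
  have : 0 < s - a := sub_pos.2 has
  have hr : 0 < r - a := sub_pos.2 har
  have hshift : min s r ^ α ≤ (min s r - a) ^ α :=
    Real.rpow_le_rpow_of_nonpos (sub_pos.2 (lt_min has har)) (by linarith) hα0
  refine (mul_le_mul_of_nonneg_right hshift (by positivity)).trans ?_
  rcases hsr.lt_or_gt with h | h
  · rw [min_eq_left h.le]
    have : 0 ≤ (s - a) ^ α * |s - r| ^ β := by positivity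
    have : 0 ≤ (s - a) ^ β * (r - a) ^ α := by positivity
    linarith
  · rw [min_eq_right h.le, abs_of_pos (sub_pos.2 h)]
    simpa only [sub_add_sub_cancel'] using
      rpow_mul_rpow_le_add hr (sub_pos.2 h) hα hα0 hβ hβ0

lemma iteratedIntegralBound_min_rpow_mul_abs_sub_rpow (hα : -1 < α) (hα0 : α ≤ 0) (hβ : -1 < β)
    (hβ0 : β ≤ 0) {a b : ℝ} (ha : 0 ≤ a) (hab : a < b) :
    IteratedIntegralBound a b (fun s r => min s r ^ α * |s - r| ^ β)
      (6 / ((α + 1) * (β + 1)) * (b - a) ^ (α + β + 2)) := by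
  have hδ : 0 < b - a := sub_pos.2 hab
  have hα1 : α + 1 ≠ 0 := by linarith
  have hβ1 : β + 1 ≠ 0 := by linarith
  have sub_rpow_nonneg : ∀ γ : ℝ, ∀ s ∈ Ioc a b, 0 ≤ (s - a) ^ γ := fun γ s hs =>
    Real.rpow_nonneg (sub_nonneg.2 hs.1.le) γ
  have diagonal := IteratedIntegralBound.mul (v := fun s r => |s - r| ^ β)
    (intervalIntegrable_sub_rpow hα a b) (sub_rpow_nonneg α)
    (fun s _ => intervalIntegrable_abs_sub_rpow hβ a b s) (fun s _ r _ => by positivity)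
    (fun s hs => integral_abs_sub_rpow_le hβ hs.1.le hs.2)
  have separated := IteratedIntegralBound.mul (v := fun _ r => (r - a) ^ α)
    (intervalIntegrable_sub_rpow hβ a b) (sub_rpow_nonneg β)
    (fun _ _ => intervalIntegrable_sub_rpow hα a b) (fun _ _ => sub_rpow_nonneg α)
    (fun _ _ => (integral_sub_rpow hα a b).le)
  refine (((diagonal.add separated).const_mul zero_le_two).mono fun s hs r hr hsr => ?_).mono_right
    (le_of_eq ?_)
  · have : 0 < min s r := ha.trans_lt (lt_min hs.1 hr.1)
    rw [abs_of_nonneg (by positivity)]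
    exact min_rpow_mul_abs_sub_rpow_le hα.le hα0 hβ.le hβ0 ha hs.1 hr.1 hsr
  · rw [integral_sub_rpow hα, integral_sub_rpow hβ,
      show α + β + 2 = (α + 1) + (β + 1) by ring, Real.rpow_add hδ (α + 1) (β + 1)]
    field_simp
    ring

variable {p : ℝ}

lemma exists_add_rpow_mul_rpow_mul_rpow_le (hα : -1 < α) (hα0 : α ≤ 0) (hβ : -1 < β) (hβ0 : β ≤ 0)
    (hpα : p + α ≤ 0) (hpβ : -1 < p + β) :
    ∃ α' β', -1 < α' ∧ α' ≤ 0 ∧ -1 < β' ∧ β' ≤ 0 ∧ α' + β' = p + α + β ∧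
      ∀ m d : ℝ, 0 < m → 0 < d →
        (m + d) ^ p * m ^ α * d ^ β ≤ m ^ α' * d ^ β' + m ^ α * d ^ (p + β) := by
  rcases le_total p 0 with hp | hp
  · refine ⟨α, p + β, hα, hα0, hpβ, by linarith, by ring, fun m d hm hd => ?_⟩
    have hmono : (m + d) ^ p ≤ d ^ p := Real.rpow_le_rpow_of_nonpos hd (by linarith) hp
    calc (m + d) ^ p * m ^ α * d ^ β ≤ d ^ p * m ^ α * d ^ β := by gcongr
      _ = m ^ α * d ^ (p + β) := by rw [Real.rpow_add hd]; ring
      _ ≤ _ := le_add_of_nonneg_left (by positivity)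
  · refine ⟨p + α, β, by linarith, hpα, hβ, hβ0, by ring, fun m d hm hd => ?_⟩
    have hsub := Real.rpow_add_le_add_rpow hm.le hd.le hp (by linarith)
    calc (m + d) ^ p * m ^ α * d ^ β ≤ (m ^ p + d ^ p) * m ^ α * d ^ β := by gcongr
      _ = _ := by rw [Real.rpow_add hm, Real.rpow_add hd]; ring

lemma exists_iteratedIntegralBound_max_rpow_mul (hα : -1 < α) (hα0 : α ≤ 0) (hβ : -1 < β)
    (hβ0 : β ≤ 0) (hpα : p + α ≤ 0) (hpβ : -1 < p + β) (hpβ0 : p + β ≤ 0) :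
    ∃ C, 0 < C ∧ ∀ a b : ℝ, 0 ≤ a → a < b →
      IteratedIntegralBound a b (fun s r => max s r ^ p * min s r ^ α * |s - r| ^ β)
        (C * (b - a) ^ (p + α + β + 2)) := by
  obtain ⟨α', β', hα', hα'0, hβ', hβ'0, hsum, hle⟩ :=
    exists_add_rpow_mul_rpow_mul_rpow_le hα hα0 hβ hβ0 hpα hpβ
  have pos : ∀ {x y : ℝ}, -1 < x → -1 < y → 0 < 6 / ((x + 1) * (y + 1)) := fun hx hy =>
    div_pos (by norm_num) (mul_pos (by linarith) (by linarith))
  refine ⟨_, add_pos (pos hα' hβ') (pos hα hpβ), fun a b ha hab => ?_⟩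
  have hbound := (iteratedIntegralBound_min_rpow_mul_abs_sub_rpow hα' hα'0 hβ' hβ'0 ha hab).add
    (iteratedIntegralBound_min_rpow_mul_abs_sub_rpow hα hα0 hpβ hpβ0 ha hab)
  rw [hsum, show α + (p + β) = p + α + β by ring, ← add_mul] at hbound
  refine hbound.mono fun s hs r hr hsr => ?_
  have hm : 0 < min s r := ha.trans_lt (lt_min hs.1 hr.1)
  have hmax : max s r = min s r + |s - r| := by rw [← max_sub_min_eq_abs', add_sub_cancel]
  rw [hmax, abs_of_nonneg (by positivity)]
  exact hle _ _ hm (abs_pos.2 (sub_ne_zero.2 hsr))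

end SingularKernels

lemma two_mul_ite_eq_min_add_one (H : ℝ) :
    2 * (if H ≤ 2 / 3 then H else 1 - H / 2) = min (2 * H - 1) (1 - H) + 1 := by
  split_ifs with h
  · rw [min_eq_left (by linarith)]
    ring
  · rw [min_eq_right (by linarith)]
    ring

theorem stmt_19_general (H T : ℝ) (hH0 : 0 < H) (hH1 : H < 1) (hT : 0 < T) :
    ∃ C : ℝ, 0 < C ∧ ∀ t t' : ℝ, 0 ≤ t → t < t' → t' ≤ T →
      (∫ s in t..t', ∫ r in t..t',
          1 / fbmRho H s r * (2 * H * s ^ (2 * H - 1)) * (2 * H * r ^ (2 * H - 1))) ≤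
        C * (t' - t) ^ (2 * (if H ≤ 2 / 3 then H else 1 - H / 2)) := by
  rw [two_mul_ite_eq_min_add_one]
  set p := min (2 * H - 1) (1 - H)
  have hpH : p ≤ 2 * H - 1 := min_le_left _ _
  have hp1 : p ≤ 1 - H := min_le_right _ _
  have hp0 : H - 1 < p := lt_min (by linarith) (by linarith)
  obtain ⟨C, hC, hbound⟩ := exists_iteratedIntegralBound_max_rpow_mul (p := p) (α := H - 1)
    (β := -H) (by linarith) (by linarith) (by linarith) (by linarith) (by linarith) (by linarith)
    (by linarith)
  rw [show p + (H - 1) + -H + 2 = p + 1 by ring] at hbound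
  have hc : 0 < √((2 - (2 : ℝ) ^ H) / 2) :=
    Real.sqrt_pos.2 (half_pos (two_sub_two_rpow_pos hH1))
  refine ⟨4 * H ^ 2 / √((2 - 2 ^ H) / 2) * T ^ (2 * H - 1 - p) * C, by positivity,
    fun t t' ht htt' ht'T => IteratedIntegralBound.integral_le htt'.le ?_⟩
  rw [mul_assoc _ C]
  refine ((hbound t t' ht htt').const_mul (by positivity)).mono fun s hs r hr hsr => ?_
  exact abs_fbm_integrand_le hH0.le hH1 (ht.trans_lt hs.1) (ht.trans_lt hr.1) (hs.2.trans ht'T)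
    (hr.2.trans ht'T) hsr hpH

theorem stmt_19 (H T : ℝ) (hH0 : 1 / 2 < H) (hH1 : H < 1) (hT : 0 < T) :
    ∃ C : ℝ, 0 < C ∧ ∀ t t' : ℝ, 0 ≤ t → t < t' → t' ≤ T →
      (∫ s in t..t', ∫ r in t..t',
          (1 / Real.sqrt ((s * r) ^ (2 * H) -
            ((1 / 2) * (s ^ (2 * H) + r ^ (2 * H) - |s - r| ^ (2 * H))) ^ 2)) *
            (2 * H * s ^ (2 * H - 1)) * (2 * H * r ^ (2 * H - 1))) ≤
        C * (t' - t) ^ (2 * (if H ≤ 2 / 3 then H else 1 - H / 2)) :=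
  stmt_19_general H T (by linarith) hH1 hT
end
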